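/- arXiv:2002.06630 — 3 statements merged into one kernel-verified Lean document; each statement's English description precedes it below -/
import Mathlib

section
/- Let X be a simplicial complex on a finite vertex set V with |V| = n. Then for all 0 ≤ q ≤ n−1 there is an isomorphism h̃_{n−2−q}(X;F) ≅ h̃^{q−1}(X^∨;F), where X^∨ = {A ⊆ V : V \ A ∉ X} is the Alexander dual of X. -/
open Finset

/-- An abstract simplicial complex on the vertex type `V`: a set of finite subsets
("simplices") closed under taking subsets. -/
def IsComplex {V : Type*} (X : Set (Finset V)) : Prop :=
  ∀ σ ∈ X, ∀ τ, τ ⊆ σ → τ ∈ X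

variable {V : Type*}

/-- The induced subcomplex `X[S] = {σ ∈ X : σ ⊆ S}`. -/
def induce (X : Set (Finset V)) (S : Finset V) : Set (Finset V) :=
  {σ | σ ∈ X ∧ σ ⊆ S}

/-- The link `lk(X,τ) = {σ : σ ∪ τ ∈ X, σ ∩ τ = ∅}`; it is the void complex if `τ ∉ X`. -/
def link [DecidableEq V] (X : Set (Finset V)) (τ : Finset V) : Set (Finset V) :=
  {σ | σ ∪ τ ∈ X ∧ Disjoint σ τ}

/-- The star `str(X,τ) = {σ ∈ X : σ ∪ τ ∈ X}`. -/
def star [DecidableEq V] (X : Set (Finset V)) (τ : Finset V) : Set (Finset V) :=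
  {σ | σ ∈ X ∧ σ ∪ τ ∈ X}

/-- The Alexander dual `X^∨ = {A ⊆ V : V \ A ∉ X}` of a complex on the finite vertex set
`V`. -/
def alexDual [Fintype V] [DecidableEq V] (X : Set (Finset V)) : Set (Finset V) :=
  {A | Aᶜ ∉ X}

section Homology

variable (F : Type) [Field F]

/-- The faces of `X` of cardinality `n` (i.e. of dimension `n-1`). -/
def Face (X : Set (Finset V)) (n : ℕ) : Type _ :=
  {σ : Finset V // σ ∈ X ∧ σ.card = n}

/-- Simplicial chains in dimension `n-1`: formal `F`-linear combinations of faces of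
cardinality `n`.  Since the empty face spans the degree `n = 0` part, this yields the
*augmented* simplicial chain complex of `X`. -/
def SChain (X : Set (Finset V)) (n : ℕ) : Type _ := Face X n →₀ F

noncomputable instance (X : Set (Finset V)) (n : ℕ) : AddCommGroup (SChain F X n) :=
  Finsupp.instAddCommGroup

noncomputable instance (X : Set (Finset V)) (n : ℕ) : Module F (SChain F X n) :=
  Finsupp.module (Face X n) F

variable [LinearOrder V]

open Classical in
/-- The boundary of a face of cardinality `n+1`: the alternating sum of its codimension-one
subfaces, with signs determined by the linear order on the vertices. -/
noncomputable def bdryElem (X : Set (Finset V)) (n : ℕ) (σ : Face X (n+1)) :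
    SChain F X n :=
  ∑ x ∈ σ.1.attach,
    if h : σ.1.erase ↑x ∈ X then
      ((-1 : F) ^ ((σ.1.filter (fun y => y < (x : V))).card)) •
        (Finsupp.single (⟨σ.1.erase ↑x, h, by
          rw [Finset.card_erase_of_mem x.2, σ.2.2]; rfl⟩ : Face X n) 1 : SChain F X n)
    else 0

/-- The simplicial boundary map (in degree `0` it is the augmentation `C_0 → C_{-1} ≅ F`
encoded by `scyc`). -/
noncomputable def sbdry (X : Set (Finset V)) (n : ℕ) :
    SChain F X (n+1) →ₗ[F] SChain F X n :=
  Finsupp.lsum F fun σ => LinearMap.toSpanSingleton F (SChain F X n) (bdryElem F X n σ)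

/-- The cycles of the augmented simplicial chain complex. -/
noncomputable def scyc (X : Set (Finset V)) : (n : ℕ) → Submodule F (SChain F X n)
  | 0 => ⊤
  | (n+1) => LinearMap.ker (sbdry F X n)

/-- `RH F X n` is the reduced simplicial homology `h̃_{n-1}(X; F)` of `X` with coefficients
in `F` (faces of cardinality `n` have dimension `n-1`). -/
abbrev RH (X : Set (Finset V)) (n : ℕ) : Type _ :=
  scyc F X n ⧸ Submodule.comap (scyc F X n).subtype (LinearMap.range (sbdry F X n))

/-- `X` is `d`-Leray over `F`: every induced subcomplex has vanishing reduced homology in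
all dimensions `i ≥ d`. -/
def IsLeray (d : ℕ) (X : Set (Finset V)) : Prop :=
  ∀ S : Finset V, ∀ i : ℕ, d ≤ i → Subsingleton (RH F (induce X S) (i+1))

end Homology


section Cohomology

variable (F : Type) [Field F] [LinearOrder V]

/-- Simplicial cochains: the linear dual of the (augmented) simplicial chain group. -/
def SCochain (X : Set (Finset V)) (n : ℕ) : Type _ :=
  Module.Dual F (SChain F X n)

noncomputable instance (X : Set (Finset V)) (n : ℕ) : AddCommGroup (SCochain F X n) :=
  inferInstanceAs (AddCommGroup (Module.Dual F (SChain F X n)))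

noncomputable instance (X : Set (Finset V)) (n : ℕ) : Module F (SCochain F X n) :=
  inferInstanceAs (Module F (Module.Dual F (SChain F X n)))

/-- The simplicial coboundary map: the dual of the boundary map. -/
noncomputable def scobdry (X : Set (Finset V)) (n : ℕ) :
    SCochain F X n →ₗ[F] SCochain F X (n+1) :=
  (sbdry F X n).dualMap

/-- The coboundaries of the augmented simplicial cochain complex. -/
noncomputable def scobound (X : Set (Finset V)) : (n : ℕ) → Submodule F (SCochain F X n)
  | 0 => ⊥
  | (n+1) => LinearMap.range (scobdry F X n)

/-- `RCoh F X n` is the reduced simplicial cohomology `h̃^{n-1}(X; F)` of `X` with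
coefficients in `F` (cochains on faces of cardinality `n` have dimension `n-1`). -/
abbrev RCoh (X : Set (Finset V)) (n : ℕ) : Type _ :=
  LinearMap.ker (scobdry F X n) ⧸
    Submodule.comap (LinearMap.ker (scobdry F X n)).subtype (scobound F X n)

end Cohomology

namespace CAD

set_option linter.unusedSectionVars false

variable {V : Type} [Fintype V] [LinearOrder V] (F : Type) [Field F]

/-- sign -/
def sgn (x : V) (S : Finset V) : F := (-1 : F) ^ (S.filter (fun y => y < x)).card

/-- The total boundary on functions on all finite subsets. -/
def bd : (Finset V → F) →ₗ[F] (Finset V → F) where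
  toFun f := fun τ => ∑ x ∈ τᶜ, sgn F x τ * f (insert x τ)
  map_add' f g := by
    funext τ; simp [mul_add, Finset.sum_add_distrib]
  map_smul' c f := by
    funext τ; simp only [Pi.smul_apply, smul_eq_mul, RingHom.id_apply, Finset.mul_sum]
    exact Finset.sum_congr rfl fun x _ => by ring

theorem bd_apply (f : Finset V → F) (τ : Finset V) :
    bd F f τ = ∑ x ∈ τᶜ, sgn F x τ * f (insert x τ) := rfl

theorem sgn_insert (x y : V) (S : Finset V) (hy : y ∉ S) :
    sgn F x (insert y S) = if y < x then - sgn F x S else sgn F x S := by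
  unfold sgn
  rw [Finset.filter_insert]
  split_ifs with h
  · rw [Finset.card_insert_of_notMem (by simp [hy]), pow_succ]; ring
  · rfl

theorem sgn_erase_self (x : V) (S : Finset V) : sgn F x (S.erase x) = sgn F x S := by
  unfold sgn
  congr 2
  ext y
  simp only [Finset.mem_filter, Finset.mem_erase]
  constructor
  · rintro ⟨⟨_, h⟩, h'⟩; exact ⟨h, h'⟩
  · rintro ⟨h, h'⟩; exact ⟨⟨ne_of_lt h', h⟩, h'⟩

theorem bd_bd (f : Finset V → F) : bd F (bd F f) = 0 := by
  funext τ
  rw [bd_apply]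
  simp only [bd_apply, Finset.mul_sum, Pi.zero_apply]
  rw [Finset.sum_sigma']
  refine Finset.sum_involution (fun a _ => ⟨a.2, a.1⟩) ?_ ?_ ?_ ?_
  · rintro ⟨x, y⟩ h
    simp only [Finset.mem_sigma, Finset.mem_compl, Finset.mem_insert, not_or] at h
    obtain ⟨hx, hyx, hy⟩ := h
    simp only
    rw [sgn_insert F y x τ hx, sgn_insert F x y τ hy, Finset.insert_comm y x τ]
    rcases lt_trichotomy x y with h | h | h
    · rw [if_pos h, if_neg (not_lt.2 h.le)]; ring
    · exact absurd h.symm hyx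
    · rw [if_pos h, if_neg (not_lt.2 h.le)]; ring
  · rintro ⟨x, y⟩ h _ h2
    simp only [Finset.mem_sigma, Finset.mem_compl, Finset.mem_insert, not_or] at h
    simp only [Sigma.mk.injEq, heq_eq_eq] at h2
    exact h.2.1 h2.1
  · rintro ⟨x, y⟩ h
    simp only [Finset.mem_sigma, Finset.mem_compl, Finset.mem_insert, not_or] at h ⊢
    exact ⟨h.2.2, fun e => h.2.1 e.symm, h.1⟩
  · rintro ⟨x, y⟩ h; rfl

theorem exact_bd [Nonempty V] (f : Finset V → F) (hf : bd F f = 0) (k : ℕ)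
    (hk : ∀ A, f A ≠ 0 → A.card = k) :
    ∃ w : Finset V → F, bd F w = f ∧ ∀ A, w A ≠ 0 → A.card = k + 1 := by
  obtain ⟨v, hv⟩ : ∃ v : V, ∀ x, v ≤ x := by
    obtain ⟨v, hv⟩ := Finite.exists_min (id : V → V)
    exact ⟨v, hv⟩
  have hs : ∀ S, sgn F v S = 1 := by
    intro S
    unfold sgn
    rw [Finset.filter_false_of_mem (fun y _ => not_lt.2 (hv y))]; simp
  refine ⟨fun τ => if v ∈ τ then f (τ.erase v) else 0, ?_, ?_⟩
  · funext τ
    rw [bd_apply]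
    by_cases h : v ∈ τ
    · have h0 := congrFun hf (τ.erase v)
      rw [bd_apply] at h0
      have hc : (τ.erase v)ᶜ = insert v τᶜ := by
        ext x; simp only [Finset.mem_compl, Finset.mem_erase, Finset.mem_insert]; tauto
      rw [hc, Finset.sum_insert (by simp [h]), hs, Finset.insert_erase h, one_mul] at h0
      rw [eq_comm, ← sub_eq_zero, ← h0.trans (Pi.zero_apply _), sub_eq_add_neg, ← Finset.sum_neg_distrib]
      congr 1
      refine Finset.sum_congr rfl fun x hx => ?_
      have hxt : x ∉ τ := by simpa using hx
      have hxv : x ≠ v := fun e => hxt (e ▸ h)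
      have h1 : sgn F x τ = - sgn F x (τ.erase v) := by
        conv_lhs => rw [← Finset.insert_erase h]
        rw [sgn_insert F x v _ (by simp), if_pos (lt_of_le_of_ne (hv x) hxv.symm)]
      rw [if_pos (Finset.mem_insert_of_mem h), Finset.erase_insert_of_ne hxv, h1]; ring
    · rw [Finset.sum_eq_single v]
      · simp [hs, h]
      · intro x _ hx
        rw [if_neg (by simp [h, hx.symm]), mul_zero]
      · intro h'; simp [h] at h'
  · intro A hA
    simp only [ne_eq, ite_eq_right_iff, Classical.not_imp] at hA
    have := hk _ hA.2
    rw [Finset.card_erase_of_mem hA.1] at this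
    have := Finset.card_pos.2 ⟨v, hA.1⟩
    omega

theorem bd_supp (f : Finset V → F) (k : ℕ) (hk : ∀ A, f A ≠ 0 → A.card = k + 1) :
    ∀ A, bd F f A ≠ 0 → A.card = k := by
  intro A hA
  rw [bd_apply] at hA
  obtain ⟨x, hx, h⟩ := Finset.exists_ne_zero_of_sum_ne_zero hA
  have := hk _ (right_ne_zero_of_mul h)
  rw [Finset.card_insert_of_notMem (by simpa using hx)] at this
  omega

theorem bd_supp0 (f : Finset V → F) (hk : ∀ A, f A ≠ 0 → A.card = 0) : bd F f = 0 := by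
  funext A
  rw [bd_apply]
  refine Finset.sum_eq_zero fun x hx => ?_
  by_contra h
  have := hk _ (right_ne_zero_of_mul h)
  rw [Finset.card_insert_of_notMem (by simpa using hx)] at this
  omega

theorem bd_suppX (X : Set (Finset V)) (hX : IsComplex X) (f : Finset V → F)
    (hf : ∀ A, f A ≠ 0 → A ∈ X) : ∀ A, bd F f A ≠ 0 → A ∈ X := by
  intro A hA
  rw [bd_apply] at hA
  obtain ⟨x, hx, h⟩ := Finset.exists_ne_zero_of_sum_ne_zero hA
  exact hX _ (hf _ (right_ne_zero_of_mul h)) _ (Finset.subset_insert _ _)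

open Classical in
/-- basis chain of a face, zero if not a face -/
noncomputable def b (X : Set (Finset V)) (k : ℕ) (A : Finset V) : SChain F X k :=
  if h : A ∈ X ∧ A.card = k then (Finsupp.single (⟨A, h⟩ : Face X k) 1 : Face X k →₀ F) else 0

theorem b_neg (X : Set (Finset V)) (k : ℕ) (A : Finset V) (h : ¬ (A ∈ X ∧ A.card = k)) :
    b F X k A = 0 := dif_neg h

theorem b_pos (X : Set (Finset V)) (k : ℕ) (A : Finset V) (h : A ∈ X ∧ A.card = k) :
    b F X k A = (Finsupp.single (⟨A, h⟩ : Face X k) 1 : Face X k →₀ F) := dif_pos h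

theorem b_ext {M : Type} [AddCommGroup M] [Module F M] (X : Set (Finset V)) (k : ℕ)
    (φ ψ : SChain F X k →ₗ[F] M) (h : ∀ A, A ∈ X ∧ A.card = k → φ (b F X k A) = ψ (b F X k A)) :
    φ = ψ := by
  refine Finsupp.lhom_ext' (M := F) (R := F) (α := Face X k) fun σ => ?_
  refine LinearMap.ext_ring ?_
  have h1 := h σ.1 σ.2
  rw [b_pos F X k σ.1 σ.2] at h1
  exact h1

theorem lsum_aux {ι M : Type} [AddCommGroup M] [Module F M] (φ : ι → M) (i : ι) :
    (Finsupp.lsum F fun j : ι => LinearMap.toSpanSingleton F M (φ j) : (ι →₀ F) →ₗ[F] M)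
      (Finsupp.single i 1) = φ i := by
  rw [Finsupp.lsum_single]
  exact one_smul _ _

/-- universal property -/
noncomputable def lft {M : Type} [AddCommGroup M] [Module F M] (X : Set (Finset V)) (k : ℕ)
    (φ : Finset V → M) : SChain F X k →ₗ[F] M :=
  (Finsupp.lsum F fun σ : Face X k => LinearMap.toSpanSingleton F M (φ σ.1) :
    (Face X k →₀ F) →ₗ[F] M)

theorem lft_b {M : Type} [AddCommGroup M] [Module F M] (X : Set (Finset V)) (k : ℕ)
    (φ : Finset V → M) (A : Finset V) (h : A ∈ X ∧ A.card = k) :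
    lft F X k φ (b F X k A) = φ A := by
  have h1 : (Finsupp.lsum F fun σ : Face X k => LinearMap.toSpanSingleton F M (φ σ.1) :
    (Face X k →₀ F) →ₗ[F] M) (Finsupp.single (⟨A, h⟩ : Face X k) 1) = φ A :=
    lsum_aux F (fun σ : Face X k => φ σ.1) ⟨A, h⟩
  rw [b_pos F X k A h]
  exact h1

theorem sbdry_b (X : Set (Finset V)) (hX : IsComplex X) (k : ℕ) (A : Finset V)
    (h : A ∈ X ∧ A.card = k + 1) :
    sbdry F X k (b F X (k+1) A) = ∑ x ∈ A, sgn F x A • b F X k (A.erase x) := by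
  have h1 : sbdry F X k (b F X (k+1) A) = bdryElem F X k ⟨A, h⟩ := by
    have h2 : (Finsupp.lsum F fun σ => LinearMap.toSpanSingleton F (SChain F X k)
        (bdryElem F X k σ) : (Face X (k+1) →₀ F) →ₗ[F] _)
        (Finsupp.single (⟨A, h⟩ : Face X (k+1)) 1) = bdryElem F X k ⟨A, h⟩ :=
      lsum_aux F (fun σ : Face X (k+1) => bdryElem F X k σ) ⟨A, h⟩
    rw [b_pos F X _ A h]
    exact h2
  rw [h1, ← Finset.sum_attach A]
  refine Finset.sum_congr rfl fun x _ => ?_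
  have hx : A.erase x ∈ X := hX _ h.1 _ (Finset.erase_subset _ _)
  have hc : (A.erase x).card = k := by rw [Finset.card_erase_of_mem x.2, h.2]; rfl
  rw [b_pos F X k _ ⟨hx, hc⟩]
  exact dif_pos hx

/-- extension by zero -/
noncomputable def E (X : Set (Finset V)) (k : ℕ) : SChain F X k →ₗ[F] (Finset V → F) :=
  lft F X k fun A => Pi.single A 1

/-- restriction -/
noncomputable def R (X : Set (Finset V)) (k : ℕ) : (Finset V → F) →ₗ[F] SChain F X k :=
  ∑ A : Finset V, LinearMap.smulRight (LinearMap.proj A) (b F X k A)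

theorem R_apply (X : Set (Finset V)) (k : ℕ) (f : Finset V → F) :
    R F X k f = ∑ A : Finset V, f A • b F X k A := by
  simp [R, LinearMap.sum_apply]

theorem E_b (X : Set (Finset V)) (k : ℕ) (A : Finset V) (h : A ∈ X ∧ A.card = k) :
    E F X k (b F X k A) = Pi.single A 1 := lft_b F X k _ A h

theorem R_E (X : Set (Finset V)) (k : ℕ) (c : SChain F X k) : R F X k (E F X k c) = c := by
  have : R F X k ∘ₗ E F X k = LinearMap.id := by
    refine b_ext F X k _ _ fun A hA => ?_
    rw [LinearMap.comp_apply, E_b F X k A hA, R_apply, Finset.sum_eq_single A]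
    · simp
    · intro B _ hB; simp [hB]
    · simp
  exact LinearMap.congr_fun this c

theorem E_R_apply (X : Set (Finset V)) (k : ℕ) (f : Finset V → F) (A : Finset V) :
    (A ∈ X ∧ A.card = k → E F X k (R F X k f) A = f A) ∧
    (¬ (A ∈ X ∧ A.card = k) → E F X k (R F X k f) A = 0) := by
  have h : ∀ B ≠ A, f B • E F X k (b F X k B) A = 0 := by
    intro B hB
    by_cases h : B ∈ X ∧ B.card = k
    · rw [E_b F X k B h]; simp [hB.symm]
    · rw [b_neg F X k B h]; simp
  have h2 : E F X k (R F X k f) A = f A • E F X k (b F X k A) A := by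
    rw [R_apply, map_sum, Finset.sum_apply, Finset.sum_eq_single A]
    · simp
    · intro B _ hB; simpa using h B hB
    · simp
  rw [h2]
  constructor
  · intro h; rw [E_b F X k A h]; simp
  · intro h; rw [b_neg F X k A h]; simp

theorem E_supp (X : Set (Finset V)) (k : ℕ) (c : SChain F X k) (σ : Finset V)
    (h : E F X k c σ ≠ 0) : σ ∈ X ∧ σ.card = k := by
  by_contra h'
  have := (E_R_apply F X k (E F X k c) σ).2 h'
  rw [R_E] at this
  exact h this

theorem E_R (X : Set (Finset V)) (k : ℕ) (f : Finset V → F)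
    (hf : ∀ A, f A ≠ 0 → A ∈ X ∧ A.card = k) : E F X k (R F X k f) = f := by
  funext σ
  by_cases h : σ ∈ X ∧ σ.card = k
  · exact (E_R_apply F X k f σ).1 h
  · have h1 : f σ = 0 := by by_contra h'; exact h (hf _ h')
    rw [h1]; exact (E_R_apply F X k f σ).2 h

theorem E_inj (X : Set (Finset V)) (k : ℕ) : Function.Injective (E F X k) :=
  Function.LeftInverse.injective (R_E F X k)

theorem bd_single (A : Finset V) : bd F (Pi.single A 1) =
    ∑ x ∈ A, sgn F x A • (Pi.single (A.erase x) 1 : Finset V → F) := by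
  funext τ
  rw [Finset.sum_apply, bd_apply]
  simp only [Pi.smul_apply, Pi.single_apply, smul_eq_mul, mul_ite, mul_one, mul_zero]
  rw [← Finset.sum_filter, ← Finset.sum_filter]
  have hset : A.filter (fun x => τ = A.erase x) =
      τᶜ.filter (fun x => insert x τ = A) := by
    ext x
    simp only [Finset.mem_filter, Finset.mem_compl]
    constructor
    · rintro ⟨h, rfl⟩; exact ⟨by simp, Finset.insert_erase h⟩
    · rintro ⟨h, e⟩; rw [← e]; exact ⟨by simp, (Finset.erase_insert h).symm⟩
  rw [hset]
  refine Finset.sum_congr rfl fun x hx => ?_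
  simp only [Finset.mem_filter, Finset.mem_compl] at hx
  rw [← hx.2, ← sgn_erase_self F x (insert x τ), Finset.erase_insert hx.1]

theorem E_sbdry (X : Set (Finset V)) (hX : IsComplex X) (k : ℕ) (c : SChain F X (k+1)) :
    E F X k (sbdry F X k c) = bd F (E F X (k+1) c) := by
  have : (E F X k) ∘ₗ (sbdry F X k) = (bd F) ∘ₗ (E F X (k+1)) := by
    refine b_ext F X (k+1) _ _ fun A hA => ?_
    rw [LinearMap.comp_apply, LinearMap.comp_apply, E_b F X _ A hA, sbdry_b F X hX k A hA,
      bd_single, map_sum]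
    refine Finset.sum_congr rfl fun x hx => ?_
    rw [map_smul, E_b F X k _ ⟨hX _ hA.1 _ (Finset.erase_subset _ _), by
      rw [Finset.card_erase_of_mem hx, hA.2]; rfl⟩]
  exact LinearMap.congr_fun this c

theorem mem_scyc (X : Set (Finset V)) (hX : IsComplex X) (k : ℕ) (c : SChain F X k) :
    c ∈ scyc F X k ↔ bd F (E F X k c) = 0 := by
  cases k with
  | zero =>
    constructor
    · intro _
      exact bd_supp0 F _ fun A hA => (E_supp F X 0 c A hA).2
    · intro _; trivial
  | succ k =>
    rw [← E_sbdry F X hX]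
    change sbdry F X k c = 0 ↔ _
    rw [← (E_inj F X k).eq_iff, map_zero]

theorem mem_range (X : Set (Finset V)) (hX : IsComplex X) (k : ℕ) (c : SChain F X k) :
    c ∈ LinearMap.range (sbdry F X k) ↔
      ∃ f, (∀ A, f A ≠ 0 → A ∈ X ∧ A.card = k + 1) ∧ E F X k c = bd F f := by
  constructor
  · rintro ⟨d, rfl⟩
    exact ⟨E F X (k+1) d, E_supp F X _ d, E_sbdry F X hX k d⟩
  · rintro ⟨f, hf, h⟩
    refine ⟨R F X (k+1) f, E_inj F X k ?_⟩
    rw [E_sbdry F X hX, E_R F X _ f hf, h]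

/-! Cochains -/

/-- the underlying functional of a cochain -/
noncomputable def app (D : Set (Finset V)) (q : ℕ) :
    SCochain F D q ≃ₗ[F] Module.Dual F (SChain F D q) :=
  LinearEquiv.refl F (Module.Dual F (SChain F D q))

theorem app_scobdry (D : Set (Finset V)) (q : ℕ) (g : SCochain F D q) (c : SChain F D (q+1)) :
    app F D (q+1) (scobdry F D q g) c = app F D q g (sbdry F D q c) := rfl

/-- total sign -/
def eps (A : Finset V) : F := ∏ a ∈ A, sgn F a (Finset.univ : Finset V)

theorem sgn_sq (x : V) (A : Finset V) : sgn F x A * sgn F x A = 1 := by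
  unfold sgn; rw [← mul_pow]; simp

theorem eps_sq (A : Finset V) : eps F A * eps F A = 1 := by
  unfold eps; rw [← Finset.prod_mul_distrib]; simp [sgn_sq]

theorem eps_insert (A : Finset V) (x : V) (hx : x ∉ A) :
    eps F A * sgn F x Aᶜ = sgn F x A * eps F (insert x A) := by
  have h : sgn F x (Finset.univ : Finset V) = sgn F x A * sgn F x Aᶜ := by
    unfold sgn
    rw [← pow_add, ← Finset.card_union_of_disjoint, ← Finset.filter_union,
      Finset.union_compl]
    exact Finset.disjoint_filter_filter disjoint_compl_right
  unfold eps
  rw [Finset.prod_insert hx, h]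
  linear_combination (- sgn F x Aᶜ * ∏ a ∈ A, sgn F a (Finset.univ : Finset V)) * sgn_sq F x A

/-- cochains on `D` as functions on complements -/
noncomputable def P (D : Set (Finset V)) (q : ℕ) : SCochain F D q →ₗ[F] (Finset V → F) where
  toFun g := fun A => eps F A * app F D q g (b F D q Aᶜ)
  map_add' c d := by
    funext σ
    simp [mul_add]
  map_smul' a c := by
    funext σ
    simp [mul_left_comm]

theorem P_apply (D : Set (Finset V)) (q : ℕ) (g : SCochain F D q) (A : Finset V) :
    P F D q g A = eps F A * app F D q g (b F D q Aᶜ) := rfl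

theorem P_supp (D : Set (Finset V)) (q : ℕ) (g : SCochain F D q) (A : Finset V)
    (h : P F D q g A ≠ 0) : Aᶜ ∈ D ∧ Aᶜ.card = q := by
  by_contra h'
  rw [P_apply, b_neg F D q _ h'] at h
  simp at h

theorem app_b (D : Set (Finset V)) (q : ℕ) (g : SCochain F D q) (A : Finset V) :
    app F D q g (b F D q Aᶜ) = eps F A * P F D q g A := by
  rw [P_apply, ← mul_assoc, eps_sq, one_mul]

theorem P_inj (D : Set (Finset V)) (q : ℕ) : Function.Injective (P F D q) := by
  intro g g' h
  apply (app F D q).injective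
  refine b_ext F D q _ _ fun A _ => ?_
  have h1 := app_b F D q g Aᶜ
  have h2 := app_b F D q g' Aᶜ
  rw [compl_compl] at h1 h2
  rw [h1, h2, h]

theorem P_surj (D : Set (Finset V)) (q : ℕ) (f : Finset V → F)
    (hf : ∀ A, f A ≠ 0 → Aᶜ ∈ D ∧ Aᶜ.card = q) : ∃ g, P F D q g = f := by
  refine ⟨(app F D q).symm (lft F D q fun B => eps F Bᶜ * f Bᶜ), ?_⟩
  funext A
  rw [P_apply, LinearEquiv.apply_symm_apply]
  by_cases h : Aᶜ ∈ D ∧ Aᶜ.card = q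
  · rw [lft_b F D q _ _ h, compl_compl, ← mul_assoc, eps_sq, one_mul]
  · have h1 : f A = 0 := by by_contra h'; exact h (hf _ h')
    rw [h1, b_neg F D q _ h, map_zero, mul_zero]

theorem P_scobdry (D : Set (Finset V)) (hD : IsComplex D) (q : ℕ) (g : SCochain F D q)
    (A : Finset V) (hA : Aᶜ ∈ D) :
    P F D (q+1) (scobdry F D q g) A = bd F (P F D q g) A := by
  by_cases h : Aᶜ.card = q + 1
  · rw [P_apply, app_scobdry, sbdry_b F D hD q _ ⟨hA, h⟩, bd_apply, map_sum, Finset.mul_sum]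
    refine Finset.sum_congr rfl fun x hx => ?_
    have hx' : x ∉ A := by simpa using hx
    rw [map_smul, ← Finset.compl_insert, app_b, smul_eq_mul,
      ← mul_assoc, eps_insert F A x hx', mul_assoc, ← mul_assoc (eps F _), eps_sq, one_mul]
  · have h1 : P F D (q+1) (scobdry F D q g) A = 0 := by
      by_contra h'; exact h (P_supp F D _ _ A h').2
    rw [h1, bd_apply, eq_comm]
    refine Finset.sum_eq_zero fun x hx => ?_
    by_contra h'
    have h2 := (P_supp F D _ _ _ (right_ne_zero_of_mul h')).2
    have hx' : x ∉ A := by simpa using hx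
    rw [Finset.compl_insert, Finset.card_erase_of_mem (by simpa using hx')] at h2
    have := Finset.card_pos.2 ⟨x, hx⟩
    omega


/-- restriction to a set of subsets -/
theorem exists_restrict (Y : Set (Finset V)) (f : Finset V → F) :
    ∃ g : Finset V → F, (∀ A ∈ Y, g A = f A) ∧ ∀ A ∉ Y, g A = 0 := by
  classical
  exact ⟨fun A => if A ∈ Y then f A else 0, fun A h => if_pos h, fun A h => if_neg h⟩

theorem dual_complex (X : Set (Finset V)) (hX : IsComplex X) : IsComplex (alexDual X) := by
  intro σ hσ τ hτ h
  exact hσ (hX _ h _ (Finset.compl_subset_compl.2 hτ))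

theorem mem_dual (X : Set (Finset V)) (A : Finset V) : Aᶜ ∈ alexDual X ↔ A ∉ X := by
  change Aᶜᶜ ∉ X ↔ _
  rw [compl_compl]

theorem bd_congr (X : Set (Finset V)) (hX : IsComplex X) (f g : Finset V → F)
    (h : ∀ A ∉ X, f A = g A) : ∀ A ∉ X, bd F f A = bd F g A := by
  intro A hA
  rw [bd_apply, bd_apply]
  refine Finset.sum_congr rfl fun x _ => ?_
  rw [h _ fun h' => hA (hX _ h' _ (Finset.subset_insert _ _))]

theorem mem_cocyc (X : Set (Finset V)) (hX : IsComplex X) (q : ℕ)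
    (g : SCochain F (alexDual X) q) :
    scobdry F (alexDual X) q g = 0 ↔ ∀ A ∉ X, bd F (P F (alexDual X) q g) A = 0 := by
  rw [← (P_inj F (alexDual X) (q+1)).eq_iff, map_zero]
  constructor
  · intro h A hA
    rw [← P_scobdry F _ (dual_complex X hX) q g A ((mem_dual X A).2 hA), h]; rfl
  · intro h
    funext A
    by_cases hA : A ∈ X
    · by_contra h'
      exact (mem_dual X A).1 (P_supp F _ _ _ A h').1 hA
    · rw [P_scobdry F _ (dual_complex X hX) q g A ((mem_dual X A).2 hA), h A hA]; rfl

theorem mem_scobound (X : Set (Finset V)) (hX : IsComplex X) (q m : ℕ)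
    (hm : m + q = Fintype.card V) (g : SCochain F (alexDual X) q) :
    g ∈ scobound F (alexDual X) q ↔ ∃ f : Finset V → F, (∀ A, f A ≠ 0 → A.card = m + 1) ∧
      ∀ A ∉ X, P F (alexDual X) q g A = bd F f A := by
  cases q with
  | zero =>
    constructor
    · intro h
      have h : g = 0 := h
      refine ⟨0, by simp, fun A _ => ?_⟩
      rw [h, map_zero, map_zero]
    · rintro ⟨f, hf, h⟩
      have hf0 : f = 0 := by
        funext A
        by_contra h'
        have h1 := hf A h'
        have h2 := Finset.card_le_univ A
        omega
      change g = 0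
      apply P_inj F (alexDual X) 0
      rw [map_zero]
      funext A
      by_cases hA : A ∈ X
      · by_contra h'
        exact (mem_dual X A).1 (P_supp F _ _ _ A h').1 hA
      · rw [h A hA, hf0, map_zero]
  | succ q =>
    constructor
    · rintro ⟨g', rfl⟩
      refine ⟨P F (alexDual X) q g', fun A hA => ?_, fun A hA => ?_⟩
      · have h1 := (P_supp F _ _ _ A hA).2
        rw [Finset.card_compl] at h1
        have h2 := Finset.card_le_univ A
        omega
      · exact P_scobdry F _ (dual_complex X hX) q g' A ((mem_dual X A).2 hA)
    · rintro ⟨f, hf, h⟩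
      obtain ⟨f', h1, h2⟩ := exists_restrict F Xᶜ f
      obtain ⟨g', hg'⟩ := P_surj F (alexDual X) q f' (by
        intro A hA
        have hAX : A ∉ X := fun h' => hA (h2 A (by simpa using h'))
        refine ⟨(mem_dual X A).2 hAX, ?_⟩
        rw [h1 A hAX] at hA
        rw [Finset.card_compl, hf A hA]
        omega)
      refine ⟨g', P_inj F (alexDual X) (q+1) ?_⟩
      funext A
      by_cases hA : A ∈ X
      · have h0 : ∀ g, P F (alexDual X) (q+1) g A = 0 := by
          intro g
          by_contra h'
          exact (mem_dual X A).1 (P_supp F _ _ _ A h').1 hA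
        rw [h0, h0]
      · rw [P_scobdry F _ (dual_complex X hX) q g' A ((mem_dual X A).2 hA), hg', h A hA]
        exact bd_congr F X hX _ _ (fun A hA => h1 A hA) A hA

theorem main [Nonempty V] (X : Set (Finset V)) (hX : IsComplex X) (q k : ℕ)
    (hk : k + 1 + q = Fintype.card V) :
    Nonempty (RH F X k ≃ₗ[F] RCoh F (alexDual X) q) := by
  let D := alexDual X
  have hPc : ∀ g A, P F D q g A ≠ 0 → A.card = k + 1 := by
    intro g A hA
    have h1 := (P_supp F _ _ _ A hA).2
    rw [Finset.card_compl] at h1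
    have h2 := Finset.card_le_univ A
    omega
  have hER : ∀ g : LinearMap.ker (scobdry F D q),
      E F X k (R F X k (bd F (P F D q g.1))) = bd F (P F D q g.1) := by
    intro g
    apply E_R
    intro A hA
    refine ⟨?_, bd_supp F _ k (hPc g.1) A hA⟩
    by_contra hAX
    exact hA ((mem_cocyc F X hX q g.1).1 g.2 A hAX)
  let Φ0 : LinearMap.ker (scobdry F D q) →ₗ[F] scyc F X k :=
    LinearMap.codRestrict (scyc F X k)
      (R F X k ∘ₗ bd F ∘ₗ P F D q ∘ₗ (LinearMap.ker (scobdry F D q)).subtype)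
      (fun g => by
        rw [mem_scyc F X hX]
        change bd F (E F X k (R F X k (bd F (P F D q g.1)))) = 0
        rw [hER g, bd_bd])
  have hΦ0 : ∀ g, E F X k (Φ0 g).1 = bd F (P F D q g.1) := hER
  let N := Submodule.comap (scyc F X k).subtype (LinearMap.range (sbdry F X k))
  let Φ : LinearMap.ker (scobdry F D q) →ₗ[F] RH F X k := N.mkQ ∘ₗ Φ0
  have hsurj : Function.Surjective Φ := by
    intro z
    obtain ⟨⟨z, hz⟩, rfl⟩ := N.mkQ_surjective z
    have hz' := (mem_scyc F X hX k z).1 hz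
    obtain ⟨w, hw, hwc⟩ := exact_bd F _ hz' k (fun A hA => (E_supp F X k z A hA).2)
    obtain ⟨f, hf1, hf2⟩ := exists_restrict F Xᶜ w
    have hfX : ∀ A, f A ≠ 0 → A ∉ X := fun A hA h' => hA (hf2 A (by simpa using h'))
    have hfc : ∀ A, f A ≠ 0 → A.card = k + 1 := by
      intro A hA
      rw [hf1 A (hfX A hA)] at hA
      exact hwc A hA
    obtain ⟨g, hg⟩ := P_surj F D q f (by
      intro A hA
      refine ⟨(mem_dual X A).2 (hfX A hA), ?_⟩
      rw [Finset.card_compl, hfc A hA]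
      omega)
    have hgk : g ∈ LinearMap.ker (scobdry F D q) := by
      rw [LinearMap.mem_ker]
      refine (mem_cocyc F X hX q g).2 fun A hA => ?_
      have h1 := bd_congr F X hX f w (fun A hA => hf1 A hA) A hA
      rw [hg, h1, hw]
      by_contra h'
      exact hA (E_supp F X k z A h').1
    refine ⟨⟨g, hgk⟩, ?_⟩
    refine (Submodule.Quotient.eq N).2 ?_
    change (Φ0 ⟨g, hgk⟩).1 - z ∈ LinearMap.range (sbdry F X k)
    refine (mem_range F X hX k _).2 ⟨f - w, ?_, ?_⟩
    · intro A hA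
      constructor
      · by_contra hAX
        exact hA (by rw [Pi.sub_apply, hf1 A hAX, sub_self])
      · by_contra hc
        apply hA
        have h1 : f A = 0 := by by_contra h'; exact hc (hfc A h')
        have h2 : w A = 0 := by by_contra h'; exact hc (hwc A h')
        rw [Pi.sub_apply, h1, h2, sub_self]
    · rw [map_sub, hΦ0, map_sub, hw, hg]
  have hker : LinearMap.ker Φ =
      Submodule.comap (LinearMap.ker (scobdry F D q)).subtype (scobound F D q) := by
    ext g
    rw [Submodule.mem_comap, Submodule.subtype_apply, mem_scobound F X hX q (k+1) hk,
      LinearMap.mem_ker]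
    change N.mkQ (Φ0 g) = 0 ↔ _
    rw [Submodule.mkQ_apply, Submodule.Quotient.mk_eq_zero]
    change (Φ0 g).1 ∈ LinearMap.range (sbdry F X k) ↔ _
    rw [mem_range F X hX, hΦ0]
    constructor
    · rintro ⟨f, hf, h⟩
      obtain ⟨w, hw, hwc⟩ := exact_bd F (P F D q g.1 - f) (by rw [map_sub, h, sub_self]) (k+1) (by
        intro A hA
        by_contra hc
        apply hA
        have h1 : f A = 0 := by by_contra h'; exact hc (hf A h').2
        have h2 : P F D q g.1 A = 0 := by by_contra h'; exact hc (hPc g.1 A h')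
        rw [Pi.sub_apply, h1, h2, sub_self])
      refine ⟨w, hwc, fun A hA => ?_⟩
      have h1 : f A = 0 := by by_contra h'; exact hA (hf A h').1
      rw [hw, Pi.sub_apply, h1, sub_zero]
    · rintro ⟨w, hwc, h⟩
      refine ⟨P F D q g.1 - bd F w, ?_, ?_⟩
      · intro A hA
        constructor
        · by_contra hAX
          exact hA (by rw [Pi.sub_apply, h A hAX, sub_self])
        · by_contra hc
          apply hA
          have h1 : bd F w A = 0 := by by_contra h'; exact hc (bd_supp F w (k+1) hwc A h')
          have h2 : P F D q g.1 A = 0 := by by_contra h'; exact hc (hPc g.1 A h')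
          rw [Pi.sub_apply, h1, h2, sub_self]
      · rw [map_sub, bd_bd, sub_zero]
  exact ⟨((Submodule.quotEquivOfEq _ _ hker.symm).trans
    (Φ.quotKerEquivOfSurjective hsurj)).symm⟩

end CAD

/-- **Combinatorial Alexander Duality** (Theorem 3.2).
Let `X` be a simplicial complex on a finite vertex set `V` with `|V| = n`.  Then for all
`0 ≤ q ≤ n-1` there is an isomorphism `h̃_{n-2-q}(X; F) ≅ h̃^{q-1}(X^∨; F)`.
(Recall `RH F X k` is `h̃_{k-1}(X;F)` and `RCoh F X k` is `h̃^{k-1}(X;F)`, so the degrees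
below are `(n-2-q)` and `(q-1)` respectively.) -/
theorem combinatorial_alexander_duality
    {V : Type} [Fintype V] [LinearOrder V] (F : Type) [Field F]
    (X : Set (Finset V)) (hX : IsComplex X)
    (n : ℕ) (hn : Fintype.card V = n)
    (q : ℕ) (hq : (q : ℤ) ≤ (n : ℤ) - 1) :
    Nonempty (RH F X (n - 1 - q) ≃ₗ[F] RCoh F (alexDual X) q) := by
  have hV : Nonempty V := by
    rw [← Fintype.card_pos_iff]; omega
  exact CAD.main F X hX q (n - 1 - q) (by omega)
end

section
/- Let X be a simplicial complex on a finite vertex set V and let K ⊆ V. Then the inclusion of the barycentric subdivision sd(X^∨[V \ K]) = Δ(X^∨[V \ K] \ {∅}) into the order complex Z_K = Δ(X^∨ \ X^∨[K]) is a homotopy equivalence; in particular Z_K is homotopy equivalent to X^∨[V \ K]. A deformation retraction is induced by the simplicial map sending a vertex σ of Z_K to the vertex σ \ K. -/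
open Finset

variable {V : Type*}

/-- The order complex `Δ(P)` of a subset `P` of a poset: the complex of finite chains
contained in `P`. -/
def orderComplex {α : Type*} [Preorder α] (P : Set α) : Set (Finset α) :=
  {C | ↑C ⊆ P ∧ IsChain (· ≤ ·) (↑C : Set α)}

/-- For `K ⊆ V`, the complex `Z_K = Δ(X^∨ \ X^∨[K])`: the order complex of the poset
(ordered by inclusion) of simplices of `X^∨` not contained in `K`. -/
def ZComplex {V : Type*} [Fintype V] [DecidableEq V] (X : Set (Finset V)) (K : Set V) :
    Set (Finset (Finset V)) :=
  orderComplex {σ : Finset V | σ ∈ alexDual X ∧ ¬ (↑σ : Set V) ⊆ K}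

/-- The geometric realization `|Z|` of a simplicial complex `Z` on the vertex type `W`,
as a subspace of `W → ℝ`: the points supported on a simplex of `Z`, with nonnegative
coordinates summing to `1`. -/
def geomRel {W : Type*} (Z : Set (Finset W)) : Set (W → ℝ) :=
  {f | ∃ σ ∈ Z, (∀ w, 0 ≤ f w) ∧ (∀ w, f w ≠ 0 → w ∈ σ) ∧ ∑ w ∈ σ, f w = 1}

section Helpers

lemma aux_mem_geomRel {W : Type*} [Fintype W] [DecidableEq W] {Z : Set (Finset W)}
    (hZ : IsComplex Z) (f : W → ℝ) :
    f ∈ geomRel Z ↔ (∀ w, 0 ≤ f w) ∧ ∑ w, f w = 1 ∧ univ.filter (fun w => f w ≠ 0) ∈ Z := by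
  constructor
  · rintro ⟨σ, hσ, h0, hs, h1⟩
    refine ⟨h0, ?_, hZ σ hσ _ ?_⟩
    · rw [← h1]
      symm
      apply Finset.sum_subset (Finset.subset_univ _)
      intro w _ hw
      by_contra h
      exact hw (hs w h)
    · intro w hw
      exact hs w (by simpa using hw)
  · rintro ⟨h0, h1, hZ'⟩
    refine ⟨_, hZ', h0, fun w hw => by simpa using hw, ?_⟩
    rw [← h1]
    apply Finset.sum_subset (Finset.subset_univ _)
    intro w _ hw
    by_contra h
    exact hw (by simpa using h)

lemma aux_oc_complex {α : Type*} [Preorder α] (P : Set α) : IsComplex (orderComplex P) := by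
  rintro σ ⟨h1, h2⟩ τ hτ
  have h : (↑τ : Set α) ⊆ ↑σ := by exact_mod_cast hτ
  exact ⟨h.trans h1, h2.mono h⟩

lemma aux_mem_oc {V : Type*} [Fintype V] [DecidableEq V] {P : Set (Finset V)}
    (f : Finset V → ℝ) :
    f ∈ geomRel (orderComplex P) ↔ (∀ w, 0 ≤ f w) ∧ ∑ w, f w = 1 ∧ (∀ s, f s ≠ 0 → s ∈ P) ∧
      ∀ s t, f s ≠ 0 → f t ≠ 0 → s ⊆ t ∨ t ⊆ s := by
  rw [aux_mem_geomRel (aux_oc_complex P)]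
  refine and_congr_right fun _ => and_congr_right fun _ => ?_
  constructor
  · rintro ⟨h1, h2⟩
    refine ⟨fun s hs => h1 (by simpa using hs), fun s t hs ht => ?_⟩
    by_cases hst : s = t
    · left; rw [hst]
    · exact h2 (by simpa using hs) (by simpa using ht) hst
  · rintro ⟨h1, h2⟩
    refine ⟨fun s hs => h1 s (by simpa using hs), fun s hs t ht _ => ?_⟩
    exact h2 s t (by simpa using hs) (by simpa using ht)

lemma aux_line {A W : Type*} [TopologicalSpace A] [Fintype W] [DecidableEq W]
    {Z : Set (Finset W)} (hZ : IsComplex Z) (f g : C(A, geomRel Z))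
    (h : ∀ a, univ.filter (fun w => (f a : W → ℝ) w ≠ 0 ∨ (g a : W → ℝ) w ≠ 0) ∈ Z) :
    f.Homotopic g := by
  have key : ∀ p : unitInterval × A, (fun w => (1 - (p.1 : ℝ)) * (f p.2 : W → ℝ) w
      + (p.1 : ℝ) * (g p.2 : W → ℝ) w) ∈ geomRel Z := by
    rintro ⟨t, a⟩
    obtain ⟨f0, f1, -⟩ := (aux_mem_geomRel hZ _).1 (f a).2
    obtain ⟨g0, g1, -⟩ := (aux_mem_geomRel hZ _).1 (g a).2
    rw [aux_mem_geomRel hZ]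
    refine ⟨fun w => ?_, ?_, hZ _ (h a) _ ?_⟩
    · have := t.2.1
      have := t.2.2
      exact add_nonneg (mul_nonneg (by linarith) (f0 w)) (mul_nonneg (by linarith) (g0 w))
    · rw [Finset.sum_add_distrib, ← Finset.mul_sum, ← Finset.mul_sum, f1, g1]; ring
    · intro w
      simp only [Finset.mem_filter, Finset.mem_univ, true_and]
      contrapose!
      rintro ⟨h1, h2⟩
      rw [h1, h2]; ring
  refine ⟨⟨⟨fun p => ⟨_, key p⟩, ?_⟩, ?_, ?_⟩⟩
  · refine Continuous.subtype_mk (continuous_pi fun w => ?_) _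
    have hf : Continuous fun p : unitInterval × A => (f p.2 : W → ℝ) w :=
      (continuous_apply w).comp (continuous_subtype_val.comp (f.continuous.comp continuous_snd))
    have hg : Continuous fun p : unitInterval × A => (g p.2 : W → ℝ) w :=
      (continuous_apply w).comp (continuous_subtype_val.comp (g.continuous.comp continuous_snd))
    have ht : Continuous fun p : unitInterval × A => (p.1 : ℝ) :=
      continuous_subtype_val.comp continuous_fst
    exact ((continuous_const.sub ht).mul hf).add (ht.mul hg)
  · intro a
    apply Subtype.ext
    funext w
    simp
  · intro a
    apply Subtype.ext
    funext w
    simp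

variable {V : Type} [Fintype V] [DecidableEq V]

/-- Barycentre map coordinates. -/
noncomputable def auxA (x : Finset V → ℝ) (v : V) : ℝ :=
  ∑ σ : Finset V, if v ∈ σ then x σ / (σ.card : ℝ) else 0

/-- Weights of superlevel sets. -/
noncomputable def auxW (y : V → ℝ) (τ : Finset V) : ℝ :=
  if τ = ∅ then 0 else (∏ v ∈ τ, y v) * ∏ v ∈ τ, ∏ u ∈ τᶜ, max 0 (y v - y u)

lemma auxA_mem {Y : Set (Finset V)} (hY : IsComplex Y) (x : Finset V → ℝ)
    (hx : x ∈ geomRel (orderComplex {σ | σ ∈ Y ∧ σ ≠ ∅})) : auxA x ∈ geomRel Y := by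
  obtain ⟨h0, h1, hP, hc⟩ := (aux_mem_oc _).1 hx
  have hnn : ∀ v (σ : Finset V), 0 ≤ (if v ∈ σ then x σ / (σ.card : ℝ) else 0) := by
    intro v σ
    split_ifs
    · exact div_nonneg (h0 _) (Nat.cast_nonneg _)
    · exact le_rfl
  -- a maximal element of the support
  obtain ⟨m, hm, hmax⟩ : ∃ m, x m ≠ 0 ∧ ∀ s, x s ≠ 0 → s ⊆ m := by
    have hne : (univ.filter (fun s => x s ≠ 0)).Nonempty := by
      by_contra hcon
      rw [Finset.not_nonempty_iff_eq_empty, Finset.filter_eq_empty_iff] at hcon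
      have : ∑ w, x w = 0 := Finset.sum_eq_zero fun w hw => by simpa using hcon hw
      linarith
    obtain ⟨m, hm, hmm⟩ := Finset.exists_max_image _ Finset.card hne
    have hm' : x m ≠ 0 := by simpa using hm
    refine ⟨m, hm', fun s hs => ?_⟩
    rcases hc s m hs hm' with h | h
    · exact h
    · have := Finset.eq_of_subset_of_card_le h (hmm s (by simpa using hs))
      rw [this]
  rw [aux_mem_geomRel hY]
  refine ⟨fun v => Finset.sum_nonneg fun σ _ => hnn v σ, ?_, hY m (hP m hm).1 _ ?_⟩
  · unfold auxA
    rw [Finset.sum_comm, ← h1]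
    refine Finset.sum_congr rfl fun σ _ => ?_
    rw [← Finset.sum_filter]
    have hfil : univ.filter (fun v => v ∈ σ) = σ := by ext v; simp
    rw [hfil, Finset.sum_const, nsmul_eq_mul]
    by_cases hσ : x σ = 0
    · simp [hσ]
    · have : (σ.card : ℝ) ≠ 0 := by
        simpa using (hP σ hσ).2
      field_simp
  · intro v hv
    by_contra hvm
    simp only [Finset.mem_filter, Finset.mem_univ, true_and] at hv
    apply hv
    refine Finset.sum_eq_zero fun σ _ => ?_
    split_ifs with hvσ
    · by_cases hσ : x σ = 0
      · simp [hσ]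
      · exact absurd (hmax σ hσ hvσ) hvm
    · rfl

lemma auxW_nonneg {y : V → ℝ} (h0 : ∀ v, 0 ≤ y v) (τ : Finset V) : 0 ≤ auxW y τ := by
  unfold auxW
  split_ifs
  · exact le_rfl
  · exact mul_nonneg (Finset.prod_nonneg fun v _ => h0 v)
      (Finset.prod_nonneg fun v _ => Finset.prod_nonneg fun u _ => le_max_left _ _)

lemma auxW_ne {y : V → ℝ} {τ : Finset V} (h : auxW y τ ≠ 0) :
    τ ≠ ∅ ∧ (∀ v ∈ τ, y v ≠ 0) ∧ ∀ v ∈ τ, ∀ u, u ∉ τ → y u < y v := by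
  unfold auxW at h
  split_ifs at h with h'
  · exact absurd rfl h
  · refine ⟨h', ?_, ?_⟩
    · exact Finset.prod_ne_zero_iff.1 (left_ne_zero_of_mul h)
    · intro v hv u hu
      have h2 := Finset.prod_ne_zero_iff.1 (right_ne_zero_of_mul h) v hv
      have h3 := Finset.prod_ne_zero_iff.1 h2 u (by simpa using hu)
      by_contra hcon
      exact h3 (max_eq_left (by linarith))

lemma auxW_sum_pos {y : V → ℝ} (h0 : ∀ v, 0 ≤ y v) (h1 : ∑ v, y v = 1) :
    0 < ∑ τ, auxW y τ := by
  have hne : (univ : Finset V).Nonempty := by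
    by_contra hcon
    rw [Finset.not_nonempty_iff_eq_empty] at hcon
    rw [hcon] at h1
    simp at h1
  obtain ⟨m, -, hm⟩ := Finset.exists_max_image univ y hne
  have hmpos : 0 < y m := by
    by_contra hcon
    have : ∑ v, y v ≤ 0 := Finset.sum_nonpos fun v hv => (hm v hv).trans (not_lt.1 hcon)
    linarith
  refine Finset.sum_pos' (fun τ _ => auxW_nonneg h0 τ)
    ⟨univ.filter (fun v => y v = y m), Finset.mem_univ _, ?_⟩
  have hnem : univ.filter (fun v => y v = y m) ≠ ∅ :=
    Finset.nonempty_iff_ne_empty.1 ⟨m, by simp⟩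
  unfold auxW
  rw [if_neg hnem]
  refine mul_pos (Finset.prod_pos fun v hv => ?_)
    (Finset.prod_pos fun v hv => Finset.prod_pos fun u hu => ?_)
  · simp only [Finset.mem_filter, Finset.mem_univ, true_and] at hv
    rw [hv]; exact hmpos
  · simp only [Finset.mem_filter, Finset.mem_univ, true_and, Finset.mem_compl] at hv hu
    refine lt_max_of_lt_right ?_
    have := lt_of_le_of_ne (hm u (Finset.mem_univ _)) hu
    linarith

lemma auxB_mem {Y : Set (Finset V)} (hY : IsComplex Y) (y : V → ℝ) (hy : y ∈ geomRel Y) :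
    (fun τ => auxW y τ / ∑ τ', auxW y τ') ∈ geomRel (orderComplex {σ | σ ∈ Y ∧ σ ≠ ∅}) := by
  obtain ⟨h0, h1, hs⟩ := (aux_mem_geomRel hY _).1 hy
  have hp := auxW_sum_pos h0 h1
  rw [aux_mem_oc]
  refine ⟨fun τ => div_nonneg (auxW_nonneg h0 τ) hp.le, ?_, ?_, ?_⟩
  · rw [← Finset.sum_div, div_self hp.ne']
  · intro τ hτ
    obtain ⟨ha, hb, -⟩ := auxW_ne (div_ne_zero_iff.1 hτ).1
    refine ⟨hY _ hs _ ?_, ha⟩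
    intro v hv
    simpa using hb v hv
  · intro s t h h'
    obtain ⟨-, -, hs⟩ := auxW_ne (div_ne_zero_iff.1 h).1
    obtain ⟨-, -, ht⟩ := auxW_ne (div_ne_zero_iff.1 h').1
    by_contra! hcon
    obtain ⟨v, hv, hv'⟩ := Finset.not_subset.1 hcon.1
    obtain ⟨u, hu, hu'⟩ := Finset.not_subset.1 hcon.2
    have := hs v hv u hu'
    have := ht u hu v hv'
    linarith

lemma aux_sd {Y : Set (Finset V)} (hY : IsComplex Y) :
    Nonempty (ContinuousMap.HomotopyEquiv (geomRel (orderComplex {σ | σ ∈ Y ∧ σ ≠ ∅}))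
      (geomRel Y)) := by
  let a : C(geomRel (orderComplex {σ | σ ∈ Y ∧ σ ≠ ∅}), geomRel Y) :=
    ⟨fun x => ⟨auxA x.1, auxA_mem hY _ x.2⟩, by
      refine Continuous.subtype_mk (continuous_pi fun v => ?_) _
      unfold auxA
      refine continuous_finsetSum _ fun σ _ => ?_
      split_ifs
      · exact ((continuous_apply σ).comp continuous_subtype_val).div_const _
      · exact continuous_const⟩
  have hWc : ∀ τ : Finset V, Continuous fun y : geomRel Y => auxW y.1 τ := by
    intro τ
    have hc : ∀ v, Continuous fun y : geomRel Y => y.1 v :=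
      fun v => (continuous_apply v).comp continuous_subtype_val
    unfold auxW
    split_ifs
    · exact continuous_const
    · refine (continuous_finsetProd _ fun v _ => hc v).mul
        (continuous_finsetProd _ fun v _ => continuous_finsetProd _ fun u _ => ?_)
      exact continuous_const.max ((hc v).sub (hc u))
  let b : C(geomRel Y, geomRel (orderComplex {σ | σ ∈ Y ∧ σ ≠ ∅})) :=
    ⟨fun y => ⟨fun τ => auxW y.1 τ / ∑ τ', auxW y.1 τ', auxB_mem hY _ y.2⟩, by
      refine Continuous.subtype_mk (continuous_pi fun τ => ?_) _
      refine (hWc τ).div (continuous_finsetSum _ fun τ' _ => hWc τ') fun y => ?_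
      obtain ⟨h0, h1, -⟩ := (aux_mem_geomRel hY _).1 y.2
      exact (auxW_sum_pos h0 h1).ne'⟩
  refine ⟨⟨a, b, ?_, ?_⟩⟩
  · apply aux_line (aux_oc_complex _)
    intro x
    obtain ⟨h0, h1, hP, hc⟩ := (aux_mem_oc _).1 x.2
    obtain ⟨-, -, hP', hc'⟩ := (aux_mem_oc _).1 (b (a x)).2
    have hcross : ∀ s t, (b (a x)).1 s ≠ 0 → x.1 t ≠ 0 → s ⊆ t ∨ t ⊆ s := by
      intro s t hs ht
      obtain ⟨-, -, hW⟩ := auxW_ne (div_ne_zero_iff.1 hs).1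
      by_contra! hcon
      obtain ⟨v, hv, hv'⟩ := Finset.not_subset.1 hcon.1
      obtain ⟨u, hu, hu'⟩ := Finset.not_subset.1 hcon.2
      have hlt : auxA x.1 u < auxA x.1 v := hW v hv u hu'
      refine absurd hlt (not_lt.2 (Finset.sum_le_sum fun σ _ => ?_))
      have hnn : 0 ≤ x.1 σ / (σ.card : ℝ) := div_nonneg (h0 _) (Nat.cast_nonneg _)
      by_cases hvσ : v ∈ σ
      · rw [if_pos hvσ]
        by_cases hσ : x.1 σ = 0
        · simp [hσ]
        · rcases hc σ t hσ ht with h | h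
          · exact absurd (h hvσ) hv'
          · rw [if_pos (h hu)]
      · rw [if_neg hvσ]
        split_ifs
        · exact hnn
        · exact le_rfl
    constructor
    · intro s hs
      have hs' : (b (a x)).1 s ≠ 0 ∨ x.1 s ≠ 0 := (Finset.mem_filter.1 (Finset.mem_coe.1 hs)).2
      rcases hs' with h | h
      · exact hP' s h
      · exact hP s h
    · intro s hs t ht _
      have hs' : (b (a x)).1 s ≠ 0 ∨ x.1 s ≠ 0 := (Finset.mem_filter.1 (Finset.mem_coe.1 hs)).2
      have ht' : (b (a x)).1 t ≠ 0 ∨ x.1 t ≠ 0 := (Finset.mem_filter.1 (Finset.mem_coe.1 ht)).2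
      rcases hs' with h | h <;> rcases ht' with h' | h'
      · exact hc' s t h h'
      · exact hcross s t h h'
      · exact (hcross t s h' h).symm
      · exact hc s t h h'
  · apply aux_line hY
    intro y
    obtain ⟨h0, h1, hs⟩ := (aux_mem_geomRel hY _).1 y.2
    refine hY _ hs _ ?_
    intro v hv
    have hv' : auxA (b y).1 v ≠ 0 ∨ y.1 v ≠ 0 := (Finset.mem_filter.1 hv).2
    simp only [Finset.mem_filter, Finset.mem_univ, true_and]
    rcases hv' with h | h
    · obtain ⟨σ, -, hσ⟩ := Finset.exists_ne_zero_of_sum_ne_zero h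
      by_cases hvσ : v ∈ σ
      · rw [if_pos hvσ] at hσ
        have h3 : (b y).1 σ ≠ 0 := (div_ne_zero_iff.1 hσ).1
        exact (auxW_ne (div_ne_zero_iff.1 h3).1).2.1 v hvσ
      · simp [hvσ] at hσ
    · exact h

/-- The pushforward along `σ ↦ σ \ K`. -/
noncomputable def auxR (K : Finset V) (x : Finset V → ℝ) (τ : Finset V) : ℝ :=
  ∑ σ ∈ Finset.univ.filter (fun σ : Finset V => σ \ K = τ), x σ

lemma auxR_sum (K : Finset V) (x : Finset V → ℝ) : ∑ τ, auxR K x τ = ∑ σ, x σ := by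
  unfold auxR
  exact Finset.sum_fiberwise _ _ _

lemma auxR_nonneg (K : Finset V) {x : Finset V → ℝ} (h : ∀ s, 0 ≤ x s) (τ : Finset V) :
    0 ≤ auxR K x τ := Finset.sum_nonneg fun s _ => h s

lemma auxR_ne (K : Finset V) {x : Finset V → ℝ} {τ : Finset V} (h : auxR K x τ ≠ 0) :
    ∃ σ, σ \ K = τ ∧ x σ ≠ 0 := by
  obtain ⟨σ, h1, h2⟩ := Finset.exists_ne_zero_of_sum_ne_zero h
  exact ⟨σ, by simpa using h1, h2⟩

lemma auxR_cont {A : Type*} [TopologicalSpace A] (K : Finset V) (f : A → Finset V → ℝ)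
    (hf : ∀ σ, Continuous fun a => f a σ) (τ : Finset V) :
    Continuous fun a => auxR K (f a) τ :=
  continuous_finsetSum _ fun σ _ => hf σ

/-- The amount of mass at `s` moved at time `t`. -/
noncomputable def auxM (t : ℝ) (x : Finset V → ℝ) (s : Finset V) : ℝ :=
  min t (∑ u ∈ univ.filter (fun u => u ⊆ s), x u) -
    min t (∑ u ∈ univ.filter (fun u => u ⊂ s), x u)

lemma aux_cum (x : Finset V → ℝ) (s : Finset V) :
    ∑ u ∈ univ.filter (fun u => u ⊆ s), x u =
      x s + ∑ u ∈ univ.filter (fun u => u ⊂ s), x u := by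
  rw [← Finset.sum_insert (by simp)]
  congr 1
  ext u
  simp only [Finset.mem_filter, Finset.mem_univ, true_and, Finset.mem_insert]
  constructor
  · intro h
    rcases h.eq_or_ssubset with h | h
    · exact Or.inl h
    · exact Or.inr h
  · rintro (h | h)
    · rw [h]
    · exact h.subset

lemma auxM_bounds {t : ℝ} {x : Finset V → ℝ} (h0 : ∀ s, 0 ≤ x s) (s : Finset V) :
    0 ≤ auxM t x s ∧ auxM t x s ≤ x s := by
  unfold auxM
  rw [aux_cum]
  have := h0 s
  generalize ∑ u ∈ univ.filter (fun u => u ⊂ s), x u = c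
  rcases min_cases t (x s + c) with h | h <;> rcases min_cases t c with h' | h' <;>
    constructor <;> linarith

lemma auxM_pos {t : ℝ} {x : Finset V → ℝ} {s : Finset V} (h : auxM t x s ≠ 0)
    (h0 : ∀ s, 0 ≤ x s) :
    ∑ u ∈ univ.filter (fun u => u ⊂ s), x u < t := by
  by_contra hcon
  apply h
  unfold auxM
  rw [aux_cum]
  have := h0 s
  rw [min_eq_left (by linarith), min_eq_left (by linarith), sub_self]

lemma auxM_lt {t : ℝ} {x : Finset V → ℝ} {s : Finset V} (h : x s - auxM t x s ≠ 0)
    (h0 : ∀ s, 0 ≤ x s) :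
    t < ∑ u ∈ univ.filter (fun u => u ⊆ s), x u := by
  by_contra hcon
  apply h
  unfold auxM
  rw [aux_cum] at hcon ⊢
  have := h0 s
  rw [min_eq_right (by linarith), min_eq_right (by linarith)]
  ring

/-- The homotopy. -/
noncomputable def auxH (K : Finset V) (t : ℝ) (x : Finset V → ℝ) (s : Finset V) : ℝ :=
  (x s - auxM t x s) + auxR K (auxM t x) s

lemma auxH_mem {Q : Set (Finset V)} (K : Finset V) (hQ : ∀ s ∈ Q, s \ K ∈ Q) (t : ℝ)
    (x : Finset V → ℝ) (hx : x ∈ geomRel (orderComplex Q)) :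
    auxH K t x ∈ geomRel (orderComplex Q) := by
  obtain ⟨h0, h1, hP, hc⟩ := (aux_mem_oc _).1 hx
  have hb := auxM_bounds (t := t) h0
  have hMx : ∀ s, auxM t x s ≠ 0 → x s ≠ 0 := by
    intro s hs h
    have := hb s
    exact hs (by linarith)
  have hDx : ∀ s, x s - auxM t x s ≠ 0 → x s ≠ 0 := by
    intro s hs h
    have := hb s
    exact hs (by linarith)
  have hsupp : ∀ s, auxH K t x s ≠ 0 →
      x s - auxM t x s ≠ 0 ∨ ∃ σ, σ \ K = s ∧ auxM t x σ ≠ 0 := by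
    intro s hs
    by_cases h : x s - auxM t x s = 0
    · right
      apply auxR_ne
      unfold auxH at hs
      rwa [h, zero_add] at hs
    · exact Or.inl h
  have hcross : ∀ s σ, x s - auxM t x s ≠ 0 → auxM t x σ ≠ 0 → σ \ K ⊆ s := by
    intro s σ hs hσ
    rcases hc s σ (hDx s hs) (hMx σ hσ) with h | h
    · rcases h.eq_or_ssubset with h | h
      · rw [h]; exact Finset.sdiff_subset
      · exfalso
        have h3 := auxM_pos hσ h0
        have h4 := auxM_lt hs h0
        have : ∑ u ∈ univ.filter (fun u => u ⊆ s), x u ≤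
            ∑ u ∈ univ.filter (fun u => u ⊂ σ), x u := by
          refine Finset.sum_le_sum_of_subset_of_nonneg ?_ fun u _ _ => h0 u
          intro u
          simp only [Finset.mem_filter, Finset.mem_univ, true_and]
          exact fun hu => lt_of_le_of_lt hu h
        linarith
    · exact Finset.sdiff_subset.trans h
  rw [aux_mem_oc]
  refine ⟨fun s => ?_, ?_, ?_, ?_⟩
  · exact add_nonneg (by linarith [hb s]) (auxR_nonneg K (fun s => (hb s).1) s)
  · unfold auxH
    rw [Finset.sum_add_distrib, auxR_sum, Finset.sum_sub_distrib, h1]; ring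
  · intro s hs
    rcases hsupp s hs with h | ⟨σ, rfl, h⟩
    · exact hP s (hDx s h)
    · exact hQ σ (hP σ (hMx σ h))
  · intro s s' hs hs'
    rcases hsupp s hs with h | ⟨σ, rfl, h⟩ <;> rcases hsupp s' hs' with h' | ⟨σ', rfl, h'⟩
    · exact hc s s' (hDx s h) (hDx s' h')
    · exact Or.inr (hcross s σ' h h')
    · exact Or.inl (hcross s' σ h' h)
    · rcases hc σ σ' (hMx σ h) (hMx σ' h') with h3 | h3
      · exact Or.inl (Finset.sdiff_subset_sdiff h3 subset_rfl)
      · exact Or.inr (Finset.sdiff_subset_sdiff h3 subset_rfl)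

lemma auxM_zero {x : Finset V → ℝ} (h0 : ∀ s, 0 ≤ x s) : auxM 0 x = 0 := by
  funext s
  unfold auxM
  rw [min_eq_left (Finset.sum_nonneg fun u _ => h0 u),
    min_eq_left (Finset.sum_nonneg fun u _ => h0 u)]
  simp

lemma auxM_one {x : Finset V → ℝ} (h0 : ∀ s, 0 ≤ x s) (h1 : ∑ s, x s = 1) : auxM 1 x = x := by
  funext s
  unfold auxM
  have h : ∀ S : Finset (Finset V), ∑ u ∈ S, x u ≤ 1 := fun S => by
    rw [← h1]
    exact Finset.sum_le_sum_of_subset_of_nonneg (Finset.subset_univ _) fun u _ _ => h0 u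
  rw [min_eq_right (h _), min_eq_right (h _), aux_cum]
  ring

end Helpers

/-- **The homotopy equivalence `Z_K ≃ sd(X^∨[V \ K]) ≃ X^∨[V \ K]`** (Eq. (4.1)).
The inclusion of the barycentric subdivision `sd(X^∨[V \ K]) = Δ(X^∨[V \ K] \ {∅})`
into `Z_K = Δ(X^∨ \ X^∨[K])` is a homotopy equivalence (so in particular `Z_K` is
homotopy equivalent to `X^∨[V \ K]`), and a retraction that is a homotopy inverse is
induced by the simplicial map sending a vertex `σ` of `Z_K` to the vertex `σ \ K`. -/
theorem sd_inclusion_homotopy_equivalence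
    {V : Type} [Fintype V] [DecidableEq V]
    (X : Set (Finset V)) (hX : IsComplex X) (K : Finset V) :
    ∃ hsub : geomRel (orderComplex {σ : Finset V | σ ∈ induce (alexDual X) Kᶜ ∧ σ ≠ ∅}) ⊆
        geomRel (ZComplex X (↑K : Set V)),
      (∃ h : ContinuousMap.HomotopyEquiv
            ↥(geomRel (orderComplex {σ : Finset V | σ ∈ induce (alexDual X) Kᶜ ∧ σ ≠ ∅}))
            ↥(geomRel (ZComplex X (↑K : Set V))),
          ∀ x, ((h.toFun x : ↥(geomRel (ZComplex X (↑K : Set V)))) : Finset V → ℝ) = ↑x) ∧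
      Nonempty (ContinuousMap.HomotopyEquiv
          ↥(geomRel (ZComplex X (↑K : Set V)))
          ↥(geomRel (induce (alexDual X) Kᶜ))) ∧
      ∃ r : C(↥(geomRel (ZComplex X (↑K : Set V))),
              ↥(geomRel (orderComplex {σ : Finset V | σ ∈ induce (alexDual X) Kᶜ ∧ σ ≠ ∅}))),
        (∀ x (τ : Finset V), ((r x : ↥(geomRel (orderComplex
              {σ : Finset V | σ ∈ induce (alexDual X) Kᶜ ∧ σ ≠ ∅}))) : Finset V → ℝ) τ =
            ∑ σ ∈ Finset.univ.filter (fun σ : Finset V => σ \ K = τ),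
              ((x : ↥(geomRel (ZComplex X (↑K : Set V)))) : Finset V → ℝ) σ) ∧
        (∀ y : ↥(geomRel (orderComplex {σ : Finset V | σ ∈ induce (alexDual X) Kᶜ ∧ σ ≠ ∅})),
            r ⟨↑y, hsub y.2⟩ = y) ∧
        ((ContinuousMap.mk (Set.inclusion hsub) (continuous_inclusion hsub)).comp r).Homotopic
          (ContinuousMap.id _) := by
  have hD : IsComplex (alexDual X) := by
    intro σ hσ τ hτ h
    exact hσ (hX _ h _ (Finset.compl_subset_compl.2 hτ))
  have hY : IsComplex (induce (alexDual X) Kᶜ) := by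
    rintro σ ⟨h1, h2⟩ τ hτ
    exact ⟨hD σ h1 τ hτ, hτ.trans h2⟩
  have hPQ : ∀ σ, σ ∈ induce (alexDual X) Kᶜ ∧ σ ≠ ∅ →
      σ ∈ alexDual X ∧ ¬ (↑σ : Set V) ⊆ (↑K : Set V) := by
    rintro σ ⟨⟨h1, h2⟩, h3⟩
    refine ⟨h1, fun h => ?_⟩
    obtain ⟨v, hv⟩ := Finset.nonempty_iff_ne_empty.2 h3
    exact (Finset.mem_compl.1 (h2 hv)) (by exact_mod_cast h (by exact_mod_cast hv))
  have hQP : ∀ σ, σ ∈ alexDual X ∧ ¬ (↑σ : Set V) ⊆ (↑K : Set V) →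
      σ \ K ∈ induce (alexDual X) Kᶜ ∧ σ \ K ≠ ∅ := by
    rintro σ ⟨h1, h2⟩
    refine ⟨⟨hD σ h1 _ Finset.sdiff_subset, ?_⟩, ?_⟩
    · intro v hv
      exact Finset.mem_compl.2 (Finset.mem_sdiff.1 hv).2
    · intro h
      exact h2 (by exact_mod_cast Finset.sdiff_eq_empty_iff_subset.1 h)
  have hsub : geomRel (orderComplex {σ : Finset V | σ ∈ induce (alexDual X) Kᶜ ∧ σ ≠ ∅}) ⊆
        geomRel (ZComplex X (↑K : Set V)) := by
    intro x hx
    obtain ⟨h0, h1, hP, hc⟩ := (aux_mem_oc _).1 hx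
    exact (aux_mem_oc _).2 ⟨h0, h1, fun s hs => hPQ s (hP s hs), hc⟩
  have hr : ∀ x ∈ geomRel (ZComplex X (↑K : Set V)), auxR K x ∈
      geomRel (orderComplex {σ : Finset V | σ ∈ induce (alexDual X) Kᶜ ∧ σ ≠ ∅}) := by
    intro x hx
    obtain ⟨h0, h1, hP, hc⟩ := (aux_mem_oc _).1 hx
    refine (aux_mem_oc _).2 ⟨auxR_nonneg K h0, by rw [auxR_sum, h1], ?_, ?_⟩
    · intro s hs
      obtain ⟨σ, rfl, h⟩ := auxR_ne K hs
      exact hQP σ (hP σ h)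
    · intro s s' hs hs'
      obtain ⟨σ, rfl, h⟩ := auxR_ne K hs
      obtain ⟨σ', rfl, h'⟩ := auxR_ne K hs'
      rcases hc σ σ' h h' with h3 | h3
      · exact Or.inl (Finset.sdiff_subset_sdiff h3 subset_rfl)
      · exact Or.inr (Finset.sdiff_subset_sdiff h3 subset_rfl)
  let r : C(↥(geomRel (ZComplex X (↑K : Set V))),
      ↥(geomRel (orderComplex {σ : Finset V | σ ∈ induce (alexDual X) Kᶜ ∧ σ ≠ ∅}))) :=
    ⟨fun x => ⟨auxR K x.1, hr _ x.2⟩, Continuous.subtype_mk (continuous_pi fun τ =>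
      auxR_cont K _ (fun σ => (continuous_apply σ).comp continuous_subtype_val) τ) _⟩
  have hri : ∀ y : ↥(geomRel (orderComplex
      {σ : Finset V | σ ∈ induce (alexDual X) Kᶜ ∧ σ ≠ ∅})), r ⟨↑y, hsub y.2⟩ = y := by
    intro y
    obtain ⟨h0, h1, hP, hc⟩ := (aux_mem_oc _).1 y.2
    have hfix : ∀ σ, y.1 σ ≠ 0 → σ \ K = σ := by
      intro σ hσ
      rw [Finset.sdiff_eq_self_iff_disjoint]
      exact Finset.disjoint_left.2 fun v hv => Finset.mem_compl.1 ((hP σ hσ).1.2 hv)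
    apply Subtype.ext
    funext τ
    change auxR K y.1 τ = y.1 τ
    unfold auxR
    rw [Finset.sum_filter, Finset.sum_eq_single τ]
    · split_ifs with h
      · rfl
      · by_contra hne
        exact h (hfix τ (Ne.symm hne))
    · intro σ _ hne
      split_ifs with h
      · by_contra h'
        exact hne (by rw [← hfix σ h', h])
      · rfl
    · intro h
      exact absurd (Finset.mem_univ _) h
  let i : C(↥(geomRel (orderComplex {σ : Finset V | σ ∈ induce (alexDual X) Kᶜ ∧ σ ≠ ∅})),
      ↥(geomRel (ZComplex X (↑K : Set V)))) :=
    ContinuousMap.mk (Set.inclusion hsub) (continuous_inclusion hsub)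
  have hH : (i.comp r).Homotopic (ContinuousMap.id _) := by
    apply ContinuousMap.Homotopic.symm
    refine ⟨⟨⟨fun p => ⟨auxH K (p.1 : ℝ) p.2.1,
      auxH_mem K (fun s hs => hPQ _ (hQP s hs)) _ _ p.2.2⟩, ?_⟩, ?_, ?_⟩⟩
    · refine Continuous.subtype_mk (continuous_pi fun s => ?_) _
      have hx : ∀ σ, Continuous fun p : unitInterval × ↥(geomRel (ZComplex X (↑K : Set V))) =>
          p.2.1 σ := fun σ =>
        (continuous_apply σ).comp (continuous_subtype_val.comp continuous_snd)
      have ht : Continuous fun p : unitInterval × ↥(geomRel (ZComplex X (↑K : Set V))) =>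
          (p.1 : ℝ) := continuous_subtype_val.comp continuous_fst
      have hM : ∀ σ, Continuous fun p : unitInterval × ↥(geomRel (ZComplex X (↑K : Set V))) =>
          auxM (p.1 : ℝ) p.2.1 σ := fun σ =>
        (ht.min (continuous_finsetSum _ fun u _ => hx u)).sub
          (ht.min (continuous_finsetSum _ fun u _ => hx u))
      exact ((hx s).sub (hM s)).add (auxR_cont K _ hM s)
    · intro x
      obtain ⟨h0, h1, -, -⟩ := (aux_mem_oc _).1 x.2
      apply Subtype.ext
      funext s
      change auxH K 0 x.1 s = x.1 s
      unfold auxH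
      rw [auxM_zero h0]
      simp [auxR]
    · intro x
      obtain ⟨h0, h1, -, -⟩ := (aux_mem_oc _).1 x.2
      apply Subtype.ext
      funext s
      change auxH K 1 x.1 s = auxR K x.1 s
      unfold auxH
      rw [auxM_one h0 h1]
      simp
  have hir : (r.comp i).Homotopic (ContinuousMap.id _) := by
    have : r.comp i = ContinuousMap.id _ := by
      ext1 y
      exact hri y
    rw [this]
  let e : ContinuousMap.HomotopyEquiv
      ↥(geomRel (orderComplex {σ : Finset V | σ ∈ induce (alexDual X) Kᶜ ∧ σ ≠ ∅}))
      ↥(geomRel (ZComplex X (↑K : Set V))) := ⟨i, r, hir, hH⟩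
  obtain ⟨e'⟩ := aux_sd hY
  exact ⟨hsub, ⟨e, fun x => rfl⟩, ⟨e.symm.trans e'⟩, r, fun x τ => rfl, hri, hH⟩
end

section
/- Let X be a simplicial complex on a finite vertex set V, let τ_1, τ_2 be disjoint subsets of V, let v ∈ τ_1, and set σ_1 = τ_1 \ {v} and σ_2 = τ_2 ∪ {v}. Define Z_1 = lk(X[V \ τ_1], τ_2) and Z_2 = str(lk(X[V \ σ_1], τ_2), v). Then Z_1 ∪ Z_2 = lk(X[V \ σ_1], τ_2) and Z_1 ∩ Z_2 = lk(X[V \ σ_1], σ_2). -/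
open Finset

variable {V : Type*}

/-- **The Mayer–Vietoris decomposition used in Proposition 2.3.**
Let `τ₁, τ₂` be disjoint subsets of the finite vertex set `V`, let `v ∈ τ₁`, and put
`σ₁ = τ₁ \ {v}`, `σ₂ = τ₂ ∪ {v}`,
`Z₁ = lk(X[V \ τ₁], τ₂)` and `Z₂ = str(lk(X[V \ σ₁], τ₂), v)`.  Then
`Z₁ ∪ Z₂ = lk(X[V \ σ₁], τ₂)` and `Z₁ ∩ Z₂ = lk(X[V \ σ₁], σ₂)`. -/
theorem link_star_union_inter
    {V : Type} [Fintype V] [DecidableEq V]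
    (X : Set (Finset V)) (hX : IsComplex X)
    (τ₁ τ₂ : Finset V) (hdisj : Disjoint τ₁ τ₂) (v : V) (hv : v ∈ τ₁) :
    link (induce X τ₁ᶜ) τ₂ ∪ star (link (induce X (τ₁.erase v)ᶜ) τ₂) {v} =
        link (induce X (τ₁.erase v)ᶜ) τ₂ ∧ 
      link (induce X τ₁ᶜ) τ₂ ∩ star (link (induce X (τ₁.erase v)ᶜ) τ₂) {v} =
        link (induce X (τ₁.erase v)ᶜ) (insert v τ₂) := by
  have hv2 : v ∉ τ₂ := Finset.disjoint_left.mp hdisj hv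
  have hsub : ∀ s : Finset V, s ⊆ τ₁ᶜ ↔ (s ⊆ (τ₁.erase v)ᶜ ∧ v ∉ s) := by
    intro s
    simp only [Finset.subset_iff, Finset.mem_compl, Finset.mem_erase]
    grind
  constructor
  · ext σ
    constructor
    · rintro (⟨⟨h1, h2⟩, h3⟩ | ⟨h, -⟩)
      · exact ⟨⟨h1, ((hsub _).1 h2).1⟩, h3⟩
      · exact h
    · rintro ⟨⟨h1, h2⟩, h3⟩
      by_cases hs : v ∈ σ
      · right
        have e : σ ∪ {v} = σ := by
          rw [Finset.union_eq_left]; simpa using hs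
        refine ⟨⟨⟨h1, h2⟩, h3⟩, ?_⟩
        rw [e]
        exact ⟨⟨h1, h2⟩, h3⟩
      · left
        exact ⟨⟨h1, (hsub _).2 ⟨h2, by simp [hs, hv2]⟩⟩, h3⟩
  · ext σ
    have e : σ ∪ {v} ∪ τ₂ = σ ∪ insert v τ₂ := by
      ext x; simp only [Finset.mem_union, Finset.mem_insert, Finset.mem_singleton]; tauto
    have le : σ ∪ τ₂ ⊆ σ ∪ insert v τ₂ :=
      Finset.union_subset_union_right (Finset.subset_insert _ _)
    constructor
    · rintro ⟨⟨⟨h1, h2⟩, h3⟩, -, ⟨h4, h5⟩, h6⟩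
      rw [e] at h4 h5
      have hs : v ∉ σ := fun h => ((hsub _).1 h2).2 (Finset.mem_union_left _ h)
      exact ⟨⟨h4, h5⟩, Finset.disjoint_insert_right.2 ⟨hs, h3⟩⟩
    · rintro ⟨⟨h1, h2⟩, h3⟩
      obtain ⟨hs, h3⟩ := Finset.disjoint_insert_right.1 h3
      have a := hX _ h1 _ le
      have b := le.trans h2
      refine ⟨⟨⟨a, (hsub _).2 ⟨b, by simp [hs, hv2]⟩⟩, h3⟩, ⟨⟨a, b⟩, h3⟩, ?_, ?_⟩
      · rw [e]; exact ⟨h1, h2⟩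
      · exact Finset.disjoint_union_left.2 ⟨h3, by simpa using hv2⟩
end
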